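/- For α > 1, ∫_{-π}^{π} (1 + e^{iφ})^{(3α/2) - 2} e^{iφ(1 - α/2)} dφ = 2π Γ(3α/2 - 1) / (Γ(α/2) Γ(α)), where the complex power uses the principal branch. -/

import Mathlib

open Set Filter Topology MeasureTheory

noncomputable def ioG (β s : ℝ) (w : ℂ) : ℂ :=
  (1 + Complex.exp w) ^ (β : ℂ) * Complex.exp (-(s : ℂ) * w)

noncomputable def ioF (β s : ℝ) : ℂ := ∫ φ in (-Real.pi)..Real.pi, ioG β s (φ * Complex.I)

lemma io_re_nonneg (w : ℂ) (hw : w.re ≤ 0) : 0 ≤ (1 + Complex.exp w).re := by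
  rw [Complex.add_re, Complex.one_re, Complex.exp_re]
  have h1 := Real.exp_le_one_iff.2 hw
  have h2 := Real.exp_pos w.re
  nlinarith [Real.neg_one_le_cos w.im]

lemma io_re_pos (w : ℂ) (hw : w.re < 0) : 0 < (1 + Complex.exp w).re := by
  rw [Complex.add_re, Complex.one_re, Complex.exp_re]
  have h1 := Real.exp_lt_one_iff.2 hw
  have h2 := Real.exp_pos w.re
  nlinarith [Real.neg_one_le_cos w.im]

lemma io_re_pos' (φ : ℝ) (h : φ ∈ Ioo (-Real.pi) Real.pi) :
    0 < (1 + Complex.exp (φ * Complex.I)).re := by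
  rw [Complex.add_re, Complex.one_re, Complex.exp_ofReal_mul_I_re]
  have h1 : Real.cos Real.pi < Real.cos |φ| :=
    Real.cos_lt_cos_of_nonneg_of_le_pi (abs_nonneg _) le_rfl (abs_lt.2 h)
  rw [Real.cos_abs, Real.cos_pi] at h1
  linarith

lemma io_contAt (β s : ℝ) (hβ : 0 < β) (w : ℂ) (hw : w.re ≤ 0) : ContinuousAt (ioG β s) w := by
  unfold ioG
  refine ContinuousAt.mul ?_ (by fun_prop)
  have h := Complex.continuousAt_cpow_const_of_re_pos (z := 1 + Complex.exp w) (w := (β : ℂ))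
    (Or.inl (io_re_nonneg w hw)) (by simpa using hβ)
  exact ContinuousAt.comp (f := fun w => 1 + Complex.exp w) h (by fun_prop)

lemma io_cont (β s : ℝ) (hβ : 0 < β) : Continuous (fun φ : ℝ => ioG β s (φ * Complex.I)) := by
  rw [continuous_iff_continuousAt]
  intro φ
  exact ContinuousAt.comp (f := fun φ : ℝ => (φ : ℂ) * Complex.I)
    (io_contAt β s hβ _ (by simp)) (by fun_prop)

lemma io_diffAt (β s : ℝ) (w : ℂ) (hw : 0 < (1 + Complex.exp w).re) :
    HasDerivAt (ioG β s) (β * (1 + Complex.exp w) ^ ((β : ℂ) - 1) * Complex.exp w *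
      Complex.exp (-(s : ℂ) * w) + (1 + Complex.exp w) ^ (β : ℂ) *
      (Complex.exp (-(s : ℂ) * w) * (-(s : ℂ)))) w := by
  unfold ioG
  refine HasDerivAt.mul ?_ ?_
  · exact HasDerivAt.cpow_const ((Complex.hasDerivAt_exp w).const_add 1) (Or.inl hw)
  · have := ((hasDerivAt_id w).const_mul (-(s : ℂ))).cexp
    simpa using this

lemma io_norm_lower (φ : ℝ) (h : φ ∈ Ioo (-Real.pi) Real.pi) :
    2 / Real.pi * (Real.pi - |φ|) ≤ ‖1 + Complex.exp (φ * Complex.I)‖ := by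
  have hp := Real.pi_pos
  have h0 := abs_lt.2 h
  have h1 := Real.one_sub_mul_le_cos (x := |φ| / 2) (by positivity) (by linarith)
  have h2 : 2 / Real.pi * (Real.pi - |φ|) = 2 * (1 - 2 / Real.pi * (|φ| / 2)) := by
    field_simp
  have h3 : 0 ≤ 2 / Real.pi * (Real.pi - |φ|) := by
    have : 0 ≤ Real.pi - |φ| := by linarith
    positivity
  have h4 : ‖1 + Complex.exp (φ * Complex.I)‖ ^ 2 = (2 * Real.cos (|φ| / 2)) ^ 2 := by
    rw [← Complex.normSq_eq_norm_sq, Complex.normSq_apply, Complex.add_re, Complex.add_im,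
      Complex.exp_ofReal_mul_I_re, Complex.exp_ofReal_mul_I_im, ← Real.cos_abs φ]
    have h5 : Real.cos |φ| = 2 * Real.cos (|φ| / 2) ^ 2 - 1 := by
      rw [← Real.cos_two_mul]; ring_nf
    have h6 := Real.sin_sq_add_cos_sq φ
    rw [← Real.cos_abs φ] at h6
    simp only [Complex.one_re, Complex.one_im]
    nlinarith
  have h5 : 0 ≤ 2 * Real.cos (|φ| / 2) := by linarith
  have h6 : ‖1 + Complex.exp (φ * Complex.I)‖ = 2 * Real.cos (|φ| / 2) :=
    (pow_left_inj₀ (norm_nonneg _) h5 two_ne_zero).1 h4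
  rw [h6, h2]; linarith

lemma io_norm_exp (s φ : ℝ) : ‖Complex.exp (-(s : ℂ) * (φ * Complex.I))‖ = 1 := by
  rw [show -(s : ℂ) * (φ * Complex.I) = ((-s * φ : ℝ) : ℂ) * Complex.I by push_cast; ring]
  exact Complex.norm_exp_ofReal_mul_I _

lemma io_integrable (β s : ℝ) (hβ : -1 < β) :
    IntervalIntegrable (fun φ : ℝ => ioG β s (φ * Complex.I)) volume (-Real.pi) Real.pi := by
  rcases lt_or_ge 0 β with hβ0 | hβ0
  · exact (io_cont β s hβ0).intervalIntegrable _ _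
  have hp := Real.pi_pos
  have hle : -Real.pi ≤ Real.pi := by linarith
  have i1 : IntervalIntegrable (fun φ : ℝ => (Real.pi - φ) ^ β) volume (-Real.pi) Real.pi := by
    have := (intervalIntegral.intervalIntegrable_rpow' (a := 2 * Real.pi) (b := 0) hβ).comp_sub_left Real.pi
    convert this using 1 <;> ring
  have i2 : IntervalIntegrable (fun φ : ℝ => (Real.pi + φ) ^ β) volume (-Real.pi) Real.pi := by
    have := (intervalIntegral.intervalIntegrable_rpow' (a := 0) (b := 2 * Real.pi) hβ).comp_add_left Real.pi
    convert this using 1 <;> ring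
  refine ((i1.add i2).const_mul ((2 / Real.pi) ^ β)).mono_fun' ?_ ?_
  · apply Measurable.aestronglyMeasurable
    unfold ioG
    fun_prop
  · rw [uIoc_of_le hle, ← Measure.restrict_congr_set Ioo_ae_eq_Ioc]
    refine (ae_restrict_iff' measurableSet_Ioo).2 (Eventually.of_forall fun φ hφ => ?_)
    simp only [ioG]
    rw [norm_mul, io_norm_exp, mul_one, Complex.norm_cpow_real]
    have h0 := abs_lt.2 hφ
    have h1 : 0 < Real.pi - |φ| := by linarith
    have a1 : 0 ≤ (Real.pi - φ) ^ β := Real.rpow_nonneg (by linarith [hφ.2]) _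
    have a2 : 0 ≤ (Real.pi + φ) ^ β := Real.rpow_nonneg (by linarith [hφ.1]) _
    calc _ ≤ (2 / Real.pi * (Real.pi - |φ|)) ^ β :=
          Real.rpow_le_rpow_of_nonpos (by positivity) (io_norm_lower φ hφ) hβ0
      _ = (2 / Real.pi) ^ β * (Real.pi - |φ|) ^ β := Real.mul_rpow (by positivity) h1.le
      _ ≤ _ := by
        refine mul_le_mul_of_nonneg_left ?_ (by positivity)
        rcases abs_choice φ with h | h <;> rw [h]
        · linarith
        · rw [sub_neg_eq_add]; linarith

lemma io_cpow_succ (β : ℝ) (z : ℂ) (hz : 0 < z.re) :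
    z ^ ((β + 1 : ℝ) : ℂ) = z ^ (β : ℂ) * z := by
  have : z ≠ 0 := by rintro rfl; simp at hz
  push_cast
  rw [Complex.cpow_add _ _ this, Complex.cpow_one]

lemma io_recA (β s : ℝ) (hβ : -1 < β) : ioF (β + 1) s = ioF β s + ioF β (s - 1) := by
  unfold ioF
  rw [← intervalIntegral.integral_add (io_integrable _ _ hβ) (io_integrable _ _ hβ)]
  refine intervalIntegral.integral_congr_Ioo_of_le (by linarith [Real.pi_pos]) fun φ hφ => ?_
  simp only [ioG]
  rw [io_cpow_succ _ _ (io_re_pos' φ hφ)]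
  rw [show -((s - 1 : ℝ) : ℂ) * (φ * Complex.I) = -(s : ℂ) * (φ * Complex.I) + φ * Complex.I by
    push_cast; ring, Complex.exp_add]
  ring

lemma io_recB (β s : ℝ) (hβ : -1 < β) : (β + 1) * ioF β (s - 1) = s * ioF (β + 1) s := by
  have hle : -Real.pi ≤ Real.pi := by linarith [Real.pi_pos]
  have key := intervalIntegral.integral_eq_sub_of_hasDerivAt_of_le hle
    (f := fun φ : ℝ => ioG (β + 1) s (φ * Complex.I))
    (f' := fun φ : ℝ => Complex.I * ((β + 1) * ioG β (s - 1) (φ * Complex.I) -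
      s * ioG (β + 1) s (φ * Complex.I)))
    (io_cont (β + 1) s (by linarith)).continuousOn ?_ ?_
  · have e1 : ∀ φ : ℝ, φ = Real.pi ∨ φ = -Real.pi → ioG (β + 1) s (φ * Complex.I) = 0 := by
      intro φ h
      have : 1 + Complex.exp (φ * Complex.I) = 0 := by
        rcases h with rfl | rfl
        · rw [Complex.exp_pi_mul_I]; ring
        · push_cast
          rw [neg_mul, Complex.exp_neg, Complex.exp_pi_mul_I]; norm_num
      unfold ioG
      rw [this, Complex.zero_cpow, zero_mul]
      exact_mod_cast (by linarith : β + 1 ≠ 0) 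
    rw [e1 _ (Or.inl rfl), e1 _ (Or.inr rfl), sub_zero, intervalIntegral.integral_const_mul,
      intervalIntegral.integral_sub, intervalIntegral.integral_const_mul,
      intervalIntegral.integral_const_mul] at key
    · have := (mul_eq_zero.1 key).resolve_left Complex.I_ne_zero
      exact sub_eq_zero.1 this
    · exact (io_integrable _ _ hβ).const_mul _
    · exact (io_integrable _ _ (by linarith)).const_mul _
  · intro φ hφ
    have h1 := io_diffAt (β + 1) s (φ * Complex.I) (io_re_pos' φ hφ)
    have h2 : HasDerivAt (fun φ : ℝ => (φ : ℂ) * Complex.I) Complex.I φ := by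
      simpa using (Complex.ofRealCLM.hasDerivAt (x := φ)).mul_const Complex.I
    have h3 := HasDerivAt.scomp (𝕜 := ℝ) (𝕜' := ℂ) φ h1 h2
    refine h3.congr_deriv ?_
    simp only [ioG, smul_eq_mul]
    rw [show -((s - 1 : ℝ) : ℂ) * (φ * Complex.I) = -(s : ℂ) * (φ * Complex.I) + φ * Complex.I by
      push_cast; ring, Complex.exp_add]
    push_cast
    rw [add_sub_cancel_right]
    ring
  · exact (((io_integrable _ _ hβ).const_mul _).sub
      ((io_integrable _ _ (by linarith)).const_mul _)).const_mul _

lemma io_subst (β s : ℝ) (hβ : 0 < β) (R : ℝ) (hR : 0 ≤ R) :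
    ∫ x in (-R)..0, ((1 - Real.exp x : ℝ) : ℂ) ^ (β : ℂ) * Complex.exp (-(s : ℂ) * x) =
    ∫ t in (Real.exp (-R))..1, (t : ℂ) ^ ((-s : ℂ) - 1) * (1 - t : ℂ) ^ ((β + 1 : ℂ) - 1) := by
  have key := intervalIntegral.integral_deriv_smul_comp' (a := -R) (b := 0)
    (f := Real.exp) (f' := Real.exp)
    (g := fun t : ℝ => (t : ℂ) ^ ((-s : ℂ) - 1) * (1 - t : ℂ) ^ ((β + 1 : ℂ) - 1))
    (fun x _ => Real.hasDerivAt_exp x) Real.continuous_exp.continuousOn ?_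
  · rw [Real.exp_zero] at key
    rw [← key]
    refine intervalIntegral.integral_congr fun x _ => ?_
    simp only [Function.comp_apply, Complex.real_smul, add_sub_cancel_right]
    have h1 : ((Real.exp x : ℝ) : ℂ) ^ ((-s : ℂ) - 1) = Complex.exp (-(s : ℂ) * x - x) := by
      rw [Complex.cpow_def_of_ne_zero (by exact_mod_cast (Real.exp_pos x).ne'),
        ← Complex.ofReal_log (Real.exp_pos x).le, Real.log_exp]
      ring_nf
    have h2 : Complex.exp (-(s : ℂ) * x) = Complex.exp x * Complex.exp (-(s : ℂ) * x - x) := by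
      rw [← Complex.exp_add]; ring_nf
    rw [h1, h2]
    push_cast
    ring
  · rintro t ⟨x, hx, rfl⟩
    rw [uIcc_of_le (by linarith)] at hx
    have hx1 := Real.exp_le_one_iff.2 hx.2
    rw [add_sub_cancel_right]
    refine ContinuousAt.continuousWithinAt (ContinuousAt.mul ?_ ?_)
    · have h := continuousAt_cpow_const (a := ((Real.exp x : ℝ) : ℂ)) (b := (-s : ℂ) - 1)
        (Or.inl (by rw [Complex.ofReal_re]; exact Real.exp_pos x))
      exact ContinuousAt.comp (f := fun t : ℝ => (t : ℂ)) h (by fun_prop)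
    · have h0 : 0 ≤ (1 - ((Real.exp x : ℝ) : ℂ)).re := by
        rw [← Complex.ofReal_one, ← Complex.ofReal_sub, Complex.ofReal_re]
        linarith
      have h := Complex.continuousAt_cpow_const_of_re_pos (z := 1 - ((Real.exp x : ℝ) : ℂ))
        (w := (β : ℂ)) (Or.inl h0) (by simpa using hβ)
      exact ContinuousAt.comp (f := fun t : ℝ => 1 - (t : ℂ)) h (by fun_prop)

lemma io_beta_limit (β s : ℝ) (hβ : 0 < β) (hs : s < 0) :
    Tendsto (fun R : ℝ => ∫ x in (-R)..0, ((1 - Real.exp x : ℝ) : ℂ) ^ (β : ℂ) *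
      Complex.exp (-(s : ℂ) * x)) atTop (𝓝 (Complex.betaIntegral (-s) (β + 1))) := by
  have hc := Complex.betaIntegral_convergent (u := -(s : ℂ)) (v := (β : ℂ) + 1)
    (by simpa using hs) (by simp; linarith)
  have h1 := intervalIntegral.continuousOn_primitive_interval' hc.symm (a := 1) (by simp)
  have h2 : Tendsto (fun R : ℝ => Real.exp (-R)) atTop (𝓝[uIcc 1 0] 0) := by
    refine tendsto_nhdsWithin_iff.2 ⟨Real.tendsto_exp_comp_nhds_zero.2 tendsto_neg_atTop_atBot, ?_⟩
    filter_upwards [eventually_ge_atTop 0] with R hR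
    rw [uIcc_of_ge zero_le_one]
    exact ⟨(Real.exp_pos _).le, Real.exp_le_one_iff.2 (by linarith)⟩
  have h3 := ((h1 0 (by simp)).tendsto.comp h2).neg
  rw [← intervalIntegral.integral_symm] at h3
  refine h3.congr' ?_
  filter_upwards [eventually_ge_atTop 0] with R hR
  rw [io_subst β s hβ R hR, intervalIntegral.integral_symm]
  rfl

lemma io_rect (β s : ℝ) (hβ : 0 < β) (R : ℝ) (hR : 0 ≤ R) :
    (Complex.exp (s * Real.pi * Complex.I) - Complex.exp (-(s * Real.pi * Complex.I))) *
      (∫ x in (-R)..0, ((1 - Real.exp x : ℝ) : ℂ) ^ (β : ℂ) * Complex.exp (-(s : ℂ) * x))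
      + Complex.I * ioF β s
      = Complex.I * ∫ y in (-Real.pi)..Real.pi, ioG β s ((-R : ℝ) + y * Complex.I) := by
  have hp := Real.pi_pos
  have key := Complex.integral_boundary_rect_eq_zero_of_continuousOn_of_differentiableOn
    (ioG β s) (⟨-R, -Real.pi⟩) (⟨0, Real.pi⟩) ?_ ?_
  · simp only [smul_eq_mul] at key
    have e1 : ∀ x : ℝ, ioG β s (x + ((-Real.pi : ℝ) : ℂ) * Complex.I) =
        Complex.exp (s * Real.pi * Complex.I) *
          (((1 - Real.exp x : ℝ) : ℂ) ^ (β : ℂ) * Complex.exp (-(s : ℂ) * x)) := by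
      intro x
      unfold ioG
      rw [Complex.exp_add, mul_add (-(s : ℂ)), Complex.exp_add]
      push_cast
      rw [neg_mul (Real.pi : ℂ), Complex.exp_neg (Real.pi * Complex.I), Complex.exp_pi_mul_I,
        show -(s : ℂ) * -(Real.pi * Complex.I) = s * Real.pi * Complex.I by ring,
        show 1 + Complex.exp x * (-1)⁻¹ = 1 - Complex.exp x by norm_num; ring]
      ring
    have e2 : ∀ x : ℝ, ioG β s (x + (Real.pi : ℂ) * Complex.I) =
        Complex.exp (-(s * Real.pi * Complex.I)) *
          (((1 - Real.exp x : ℝ) : ℂ) ^ (β : ℂ) * Complex.exp (-(s : ℂ) * x)) := by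
      intro x
      unfold ioG
      rw [Complex.exp_add, mul_add (-(s : ℂ)), Complex.exp_add]
      push_cast
      rw [Complex.exp_pi_mul_I,
        show -(s : ℂ) * (Real.pi * Complex.I) = -(s * Real.pi * Complex.I) by ring,
        show 1 + Complex.exp x * (-1) = 1 - Complex.exp x by ring]
      ring
    simp only [e1, e2, intervalIntegral.integral_const_mul, Complex.ofReal_zero, zero_add] at key
    unfold ioF
    linear_combination key
  · rintro w ⟨hw, -⟩
    refine (io_contAt β s hβ w ?_).continuousWithinAt
    have : w.re ∈ uIcc (-R) 0 := hw
    rw [uIcc_of_le (by linarith)] at this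
    exact this.2
  · rintro w ⟨hw, -⟩
    have : w.re ∈ Ioo (min (-R) 0) (max (-R) 0) := hw
    rw [max_eq_right (by linarith)] at this
    exact (io_diffAt β s w (io_re_pos w this.2)).differentiableAt.differentiableWithinAt

lemma io_left_limit (β s : ℝ) (hβ : 0 < β) (hs : s < 0) :
    Tendsto (fun R : ℝ => ∫ y in (-Real.pi)..Real.pi, ioG β s ((-R : ℝ) + y * Complex.I))
      atTop (𝓝 0) := by
  have hb : ∀ᶠ R : ℝ in atTop, ‖∫ y in (-Real.pi)..Real.pi, ioG β s ((-R : ℝ) + y * Complex.I)‖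
      ≤ 2 ^ β * Real.exp (s * R) * |Real.pi - -Real.pi| := by
    filter_upwards [eventually_ge_atTop 0] with R hR
    refine intervalIntegral.norm_integral_le_of_norm_le_const fun y _ => ?_
    unfold ioG
    rw [norm_mul, Complex.norm_cpow_real]
    have h1 : ‖1 + Complex.exp ((-R : ℝ) + y * Complex.I)‖ ≤ 2 := by
      refine (norm_add_le _ _).trans ?_
      rw [norm_one, Complex.norm_exp]
      have : Real.exp (((-R : ℝ) : ℂ) + y * Complex.I).re ≤ 1 :=
        Real.exp_le_one_iff.2 (by simpa using hR)
      linarith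
    have h2 : ‖Complex.exp (-(s : ℂ) * ((-R : ℝ) + y * Complex.I))‖ = Real.exp (s * R) := by
      rw [Complex.norm_exp]
      congr 1
      simp
    rw [h2]
    gcongr
  refine squeeze_zero_norm' hb ?_
  have : Tendsto (fun R : ℝ => Real.exp (s * R)) atTop (𝓝 0) :=
    Real.tendsto_exp_comp_nhds_zero.2 (tendsto_id.const_mul_atTop_of_neg hs)
  simpa using (this.const_mul (2 ^ β)).mul_const |Real.pi - -Real.pi|

lemma io_F_beta (β s : ℝ) (hβ : 0 < β) (hs : s < 0) :
    ioF β s = -2 * Complex.sin (Real.pi * s) * Complex.betaIntegral (-s) (β + 1) := by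
  have h1 := (((io_beta_limit β s hβ hs).const_mul
    (Complex.exp (s * Real.pi * Complex.I) - Complex.exp (-(s * Real.pi * Complex.I)))).add_const
    (Complex.I * ioF β s))
  have h2 := (io_left_limit β s hβ hs).const_mul Complex.I
  rw [mul_zero] at h2
  have h3 := tendsto_nhds_unique (h1.congr' (by
    filter_upwards [eventually_ge_atTop 0] with R hR
    exact io_rect β s hβ R hR)) h2
  have h4 : Complex.exp (s * Real.pi * Complex.I) - Complex.exp (-(s * Real.pi * Complex.I)) =
      2 * Complex.sin (Real.pi * s) * Complex.I := by
    rw [Complex.sin]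
    have := Complex.I_mul_I
    rw [show -(Real.pi * s : ℂ) * Complex.I = -(s * Real.pi * Complex.I) by ring,
      show (Real.pi * s : ℂ) * Complex.I = (s * Real.pi * Complex.I) by ring]
    linear_combination (-(Complex.exp (-(s * Real.pi * Complex.I)) - Complex.exp (s * Real.pi * Complex.I))) * this
  rw [h4] at h3
  have h5 : Complex.I * (ioF β s + 2 * Complex.sin (Real.pi * s) *
    Complex.betaIntegral (-s) (β + 1)) = 0 := by linear_combination h3
  have := (mul_eq_zero.1 h5).resolve_left Complex.I_ne_zero
  linear_combination this

noncomputable def ioR (β s : ℝ) : ℂ :=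
  2 * Real.pi * Complex.Gamma (β + 1) * (Complex.Gamma (s + 1))⁻¹ * (Complex.Gamma (β + 1 - s))⁻¹

lemma io_base (β s : ℝ) (hβ : 0 < β) (hs : s < 0) : ioF β s = ioR β s := by
  rw [io_F_beta β s hβ hs, Complex.betaIntegral_eq_Gamma_mul_div _ _ (by simpa using hs)
    (by simp; linarith), ioR]
  have h1 := Complex.Gamma_mul_Gamma_one_sub (-(s : ℂ))
  have h2 : Complex.Gamma (-(s : ℂ)) ≠ 0 := Complex.Gamma_ne_zero_of_re_pos (by simpa using hs)
  have h3 : (Real.pi : ℂ) ≠ 0 := by exact_mod_cast Real.pi_ne_zero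
  rw [show (Real.pi : ℂ) * -s = -(Real.pi * s) by ring, Complex.sin_neg,
    show 1 - -(s : ℂ) = s + 1 by ring] at h1
  rw [show -(s : ℂ) + (β + 1) = β + 1 - s by ring]
  by_cases h : Complex.sin (Real.pi * s) = 0
  · rw [h, neg_zero, div_zero] at h1
    rw [h, (mul_eq_zero.1 h1).resolve_left h2]
    simp
  · have h4 : Complex.Gamma (s + 1) ≠ 0 := by
      intro h5
      rw [h5, mul_zero, eq_comm, div_eq_zero_iff] at h1
      rcases h1 with h1 | h1
      · exact h3 h1
      · exact h (neg_eq_zero.1 h1)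
    have h6 : -2 * Complex.sin (Real.pi * s) * Complex.Gamma (-s) =
        2 * Real.pi * (Complex.Gamma (s + 1))⁻¹ := by
      rw [eq_div_iff (neg_ne_zero.2 h)] at h1
      rw [eq_mul_inv_iff_mul_eq₀ h4]
      linear_combination 2 * h1
    rw [div_eq_mul_inv]
    linear_combination (Complex.Gamma (β + 1) * (Complex.Gamma (β + 1 - s))⁻¹) * h6

lemma io_F_cont (β : ℝ) (hβ : 0 < β) : Continuous (ioF β) := by
  unfold ioF
  refine intervalIntegral.continuous_parametric_intervalIntegral_of_continuous' ?_ _ _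
  have h := (io_cont β 0 hβ)
  have h' : Continuous (fun p : ℝ × ℝ => ioG β 0 (p.2 * Complex.I) *
    Complex.exp (-(p.1 : ℂ) * (p.2 * Complex.I))) :=
    (h.comp continuous_snd).mul (by fun_prop)
  refine h'.congr fun p => ?_
  simp [ioG, Function.uncurry]

lemma io_R_cont (β : ℝ) : Continuous (ioR β) := by
  unfold ioR
  have h := Complex.differentiable_one_div_Gamma.continuous
  refine Continuous.mul (continuous_const.mul ?_) ?_
  · exact h.comp (f := fun s : ℝ => (s : ℂ) + 1) (by fun_prop)
  · exact h.comp (f := fun s : ℝ => (β : ℂ) + 1 - s) (by fun_prop)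

lemma io_pos (β : ℝ) (hβ : 0 < β) (n : ℕ) : ∀ s : ℝ, s < n → ioF β s = ioR β s := by
  induction n with
  | zero => intro s hs; exact io_base β s hβ (by simpa using hs)
  | succ n ih =>
    intro s hs
    by_cases h0 : s = 0
    · subst h0
      have h1 : Tendsto (ioF β) (𝓝[<] 0) (𝓝 (ioF β 0)) :=
        (io_F_cont β hβ).continuousAt.tendsto.mono_left nhdsWithin_le_nhds
      have h2 : Tendsto (ioR β) (𝓝[<] 0) (𝓝 (ioR β 0)) :=
        (io_R_cont β).continuousAt.tendsto.mono_left nhdsWithin_le_nhds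
      refine tendsto_nhds_unique h1 (h2.congr' ?_)
      filter_upwards [self_mem_nhdsWithin] with s hs
      exact (io_base β s hβ hs).symm
    · have h1 := ih (s - 1) (by push_cast at hs; linarith)
      have hA := io_recA β s (by linarith)
      have hB := io_recB β s (by linarith)
      have h0' : (s : ℂ) ≠ 0 := by exact_mod_cast h0
      have g1 := Complex.one_div_Gamma_eq_self_mul_one_div_Gamma_add_one s
      have g2 := Complex.one_div_Gamma_eq_self_mul_one_div_Gamma_add_one (β + 1 - s)
      apply mul_left_cancel₀ h0'
      have h2 : ioR β (s - 1) = 2 * Real.pi * Complex.Gamma (β + 1) *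
          (s * (Complex.Gamma (s + 1))⁻¹) * (Complex.Gamma (β + 1 - s + 1))⁻¹ := by
        rw [← g1, ioR]; push_cast
        rw [sub_add_cancel, show (β : ℂ) + 1 - (s - 1) = β + 1 - s + 1 by ring]
      have h3 : (s : ℂ) * ioF β s = (β + 1 - s) * ioF β (s - 1) := by
        linear_combination hB.symm.trans rfl - s * hA
      rw [h3, h1, h2, ioR, g2]
      ring

lemma io_final (β s : ℝ) (hβ : -1 < β) : ioF β s = ioR β s := by
  obtain ⟨n, hn⟩ := exists_nat_gt s
  have h1 := io_pos (β + 1) (by linarith) n s hn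
  have hA := io_recA β s (by linarith)
  have hB := io_recB β s (by linarith)
  have h0 : (β : ℂ) + 1 ≠ 0 := by exact_mod_cast (by linarith : β + 1 ≠ 0)
  have g2 := Complex.one_div_Gamma_eq_self_mul_one_div_Gamma_add_one (β + 1 - s)
  have g3 := Complex.Gamma_add_one ((β : ℂ) + 1) h0
  apply mul_left_cancel₀ h0
  have h3 : ((β : ℂ) + 1) * ioF β s = (β + 1 - s) * ioF (β + 1) s := by
    linear_combination (-(β : ℂ) - 1) * hA - hB
  rw [h3, h1, ioR, ioR, g2]
  push_cast
  rw [g3, show (β : ℂ) + 1 + 1 - s = β + 1 - s + 1 by ring]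
  ring

/-- For `α > 1`,
`∫_{-π}^{π} (1 + e^{iφ})^{3α/2 - 2} e^{iφ(1 - α/2)} dφ = 2π Γ(3α/2-1)/(Γ(α/2)Γ(α))`,
with principal branch powers. -/
theorem integral_one_add_exp_cpow (α : ℝ) (hα : 1 < α) :
    ∫ φ in (-Real.pi)..Real.pi,
        (1 + Complex.exp (φ * Complex.I)) ^ ((3 * α / 2 - 2 : ℝ) : ℂ) *
          Complex.exp (φ * Complex.I * (1 - α / 2)) =
      2 * Real.pi * Complex.Gamma (3 * α / 2 - 1) /
        (Complex.Gamma (α / 2) * Complex.Gamma α) := by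
  have h := io_final (3 * α / 2 - 2) (α / 2 - 1) (by linarith)
  have e1 : ioR (3 * α / 2 - 2) (α / 2 - 1) = 2 * Real.pi * Complex.Gamma (3 * α / 2 - 1) /
        (Complex.Gamma (α / 2) * Complex.Gamma α) := by
    unfold ioR
    push_cast
    rw [show (3 * α / 2 - 2 + 1 : ℂ) = 3 * α / 2 - 1 by ring, sub_add_cancel,
      show (3 * α / 2 - 1 - (α / 2 - 1) : ℂ) = α by ring, mul_assoc, ← mul_inv, ← div_eq_mul_inv]
  rw [← e1, ← h, ioF]
  refine intervalIntegral.integral_congr fun φ _ => ?_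
  simp only [ioG]
  congr 2
  push_cast
  ring
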